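/- Let 𝓕_1, …, 𝓕_m be Lalley–Gatzouras schemes and let ω ∈ {1,…,m}^ℕ be chosen at random with respect to a Bernoulli measure on {1,…,m}^ℕ with positive weights (P_1, …, P_m). Then almost surely each symbol k has limit frequency P_k, and consequently almost surely dim_H Λ_ω = 𝓛(P), where 𝓛 is the continuous extension to the open simplex of the function assigning to each positive rational probability vector Q the common value dim_H Λ_{ω(Q)} over periodic sequences ω(Q) with frequencies Q. In particular, dim_H Λ_ω is almost surely constant. -/

import Mathlib

/-!
By the strong law of large numbers almost every `ω` has limit frequencies `P`, so the point is a
deterministic one: the dimension of the limit set depends only on the frequencies, and does so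
continuously.

Merge the alphabets of all schemes into one type, so that `Λ_ω` is the set of points of the plane
whose address `z` has its `l`-th letter in the scheme `ω l` for all `l` (`Carpet.isLimitSet_iff`).
Let `ω` and `ω'` have positive limit frequencies `P` and `Q` with `Q k < (1 + ε) * P k`. Send
the position of the `n`-th appearance of each symbol in `ω'` to that of its `n`-th appearance in
`ω`. This increases positions by a factor of at most `1 + ε`, up to an additive constant
(`Carpet.exists_relocate_le`), and rearranging letters accordingly maps addresses over `ω`
bijectively to addresses over `ω'`. Two addresses in the same
approximate square of side `r` agree up to the stopping times of that scale. After rearrangement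
they still agree on all but a proportion `ε` of these letters, hence the two points are
at distance `O (r ^ γ)`, where `γ = 1 - ε * log α / log β` and `α`, `β` are the extreme contraction
ratios (`Carpet.IsCoding.abs_point_comp_sub_le`).

This need not define a Hölder map between the limit sets, since without strict separation a point
may have several addresses. But distinct approximate squares, taken half-open, are
disjoint and have sides at least `α * r`, so each contains its own point of a grid of mesh `α * r`
(`Carpet.IsCarpet.agree`), and a set of diameter `r` meets boundedly many of them. That is enough
to push covers forward (`Carpet.mul_dimH_le`), and gives `γ * dim Λ_ω' ≤ dim Λ_ω`
(`Carpet.IsCarpet.mul_dimH_le`).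

Finally take for `ω'` periodic sequences whose rational frequencies converge to `P`. Both
inequalities hold with `ω` and `ω'` in either role, the dimensions for `ω'` converge to `𝓛 P`
by continuity, and `ε → 0` gives `dim Λ_ω = 𝓛 P` (`Carpet.dimH_coded`).
-/

open Filter Metric Finset

/-- A **Lalley–Gatzouras scheme** on `[0,1]²`: a finite family of affine maps
`f (i,j) (x,y) = (a i j * x + c i j, b i * y + d i)` indexed by an alphabet
`{(i,j) : i < m₁, j < m₂ i}`, where the contraction in the horizontal direction is at
least as strong as in the vertical one (`a i j ≤ b i`), and consecutive images of the unit
square are stacked inside `[0,1]²` in increasing order without overlapping. -/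
structure LGScheme where
  m₁ : ℕ
  hm₁ : 0 < m₁
  m₂ : Fin m₁ → ℕ
  hm₂ : ∀ i, 0 < m₂ i
  a : (i : Fin m₁) → Fin (m₂ i) → ℝ
  b : Fin m₁ → ℝ
  c : (i : Fin m₁) → Fin (m₂ i) → ℝ
  d : Fin m₁ → ℝ
  ha_pos : ∀ i j, 0 < a i j
  hab : ∀ i j, a i j ≤ b i
  hb_lt_one : ∀ i, b i < 1
  hc_first : ∀ i, 0 ≤ c i ⟨0, hm₂ i⟩
  hc_step : ∀ (i : Fin m₁) (j : Fin (m₂ i)) (h : (j : ℕ) + 1 < m₂ i),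
    a i j + c i j ≤ c i ⟨(j : ℕ) + 1, h⟩
  hc_last : ∀ i, c i ⟨m₂ i - 1, Nat.sub_lt (hm₂ i) Nat.one_pos⟩ ≤
    1 - a i ⟨m₂ i - 1, Nat.sub_lt (hm₂ i) Nat.one_pos⟩
  hd_first : 0 ≤ d ⟨0, hm₁⟩
  hd_step : ∀ (i : Fin m₁) (h : (i : ℕ) + 1 < m₁), b i + d i ≤ d ⟨(i : ℕ) + 1, h⟩
  hd_last : d ⟨m₁ - 1, Nat.sub_lt hm₁ Nat.one_pos⟩ ≤ 1 - b ⟨m₁ - 1, Nat.sub_lt hm₁ Nat.one_pos⟩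

namespace LGScheme

/-- The alphabet (set of symbols `(i,j)`) of a Lalley–Gatzouras scheme. -/
def Sym (S : LGScheme) : Type := (i : Fin S.m₁) × Fin (S.m₂ i)

/-- The affine map `f (i,j) (x,y) = (a i j * x + c i j, b i * y + d i)` of the scheme
associated to the symbol `s = (i,j)`. -/
def toMap (S : LGScheme) (s : S.Sym) : ℝ × ℝ → ℝ × ℝ :=
  fun p => (S.a s.1 s.2 * p.1 + S.c s.1 s.2, S.b s.1 * p.2 + S.d s.1)

/-- The Hutchinson operator of the scheme: `A ↦ ⋃_{(i,j)} f (i,j) '' A`. -/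
def hutch (S : LGScheme) (A : Set (ℝ × ℝ)) : Set (ℝ × ℝ) :=
  ⋃ s : S.Sym, S.toMap s '' A

/-- The **separation condition**: the strict inequalities
`c i (j+1) > a i j + c i j` and `d (i+1) > b i + d i`. -/
def Separation (S : LGScheme) : Prop :=
  (∀ (i : Fin S.m₁) (j : Fin (S.m₂ i)) (h : (j : ℕ) + 1 < S.m₂ i),
    S.a i j + S.c i j < S.c i ⟨(j : ℕ) + 1, h⟩) ∧
  ∀ (i : Fin S.m₁) (h : (i : ℕ) + 1 < S.m₁), S.b i + S.d i < S.d ⟨(i : ℕ) + 1, h⟩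

end LGScheme

/-- The symbolic space `A_ω = A (ω 0) × A (ω 1) × ⋯` associated to a family of schemes
`S` and a sequence `ω` of indices of schemes. -/
def SymSpace {m : ℕ} (S : Fin m → LGScheme) (ω : ℕ → Fin m) : Type :=
  (n : ℕ) → (S (ω n)).Sym

namespace SymSpace

variable {m : ℕ} {S : Fin m → LGScheme} {ω : ℕ → Fin m}

/-- The **rectangle** `R_{n₁,n₂} x` in the symbolic space: the set of sequences agreeing
with `x` in the first `n₂` symbols `i` and the first `n₁` full symbols `(i,j)`. -/
def rect (x : SymSpace S ω) (n₁ n₂ : ℕ) : Set (SymSpace S ω) :=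
  {y | (∀ k < n₂, (y k).1 = (x k).1) ∧ ∀ k < n₁, y k = x k}

/-- The **width** `∏_{k<n₁} a (ω k) (x k)` of the rectangle `R_{n₁,n₂} x`. -/
def width (x : SymSpace S ω) (n₁ : ℕ) : ℝ :=
  ∏ k ∈ Finset.range n₁, (S (ω k)).a (x k).1 (x k).2

/-- The **height** `∏_{k<n₂} b (ω k) (x k)` of the rectangle `R_{n₁,n₂} x`. -/
def height (x : SymSpace S ω) (n₂ : ℕ) : ℝ :=
  ∏ k ∈ Finset.range n₂, (S (ω k)).b (x k).1

/-- `R_{n₁,n₂} x` is an **approximate square** (with comparability constant `C`) if its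
width and height agree up to the multiplicative constant `C`. -/
def IsApproxSquare (C : ℝ) (x : SymSpace S ω) (n₁ n₂ : ℕ) : Prop :=
  n₁ ≤ n₂ ∧ height x n₂ ≤ C * width x n₁ ∧ width x n₁ ≤ C * height x n₂

end SymSpace

/-- `IsLimitSet S ω Λ` : `Λ` is the limit set of the sequence of iterated function schemes
`S (ω 0), S (ω 1), …`, i.e. `Λ` is a nonempty compact set such that for every nonempty
compact `A`, the sets `F (ω 0) ∘ ⋯ ∘ F (ω (n-1)) (A)` converge to `Λ` in the Hausdorff
metric (`F k` denoting the Hutchinson operator of the scheme `S k`). -/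
def IsLimitSet {m : ℕ} (S : Fin m → LGScheme) (ω : ℕ → Fin m) (Λ : Set (ℝ × ℝ)) : Prop :=
  Λ.Nonempty ∧ IsCompact Λ ∧ ∀ A : Set (ℝ × ℝ), A.Nonempty → IsCompact A →
    Tendsto
      (fun n => hausdorffDist ((List.range n).foldr (fun k B => (S (ω k)).hutch B) A) Λ)
      atTop (nhds 0)

/-- The symbol `k` has limit frequency `P` in the sequence `ω` if
`(1/n) #{l < n : ω l = k} → P` as `n → ∞`. -/
def HasLimitFreq {m : ℕ} (ω : ℕ → Fin m) (k : Fin m) (P : ℝ) : Prop :=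
  Tendsto (fun n : ℕ => (((Finset.range n).filter fun l => ω l = k).card : ℝ) / n)
    atTop (nhds P)

/-- A sequence `ω` is periodic if it has a period `T ≥ 1`. -/
def IsPeriodic {m : ℕ} (ω : ℕ → Fin m) : Prop :=
  ∃ T : ℕ, 0 < T ∧ ∀ l, ω (l + T) = ω l

/-- `NthAppear ω k n l` : the (0-indexed) position `l` is the place of the `n`-th
appearance (`n ≥ 1`) of the symbol `k` in the sequence `ω`. -/
def NthAppear {m : ℕ} (ω : ℕ → Fin m) (k : Fin m) (n l : ℕ) : Prop :=
  ω l = k ∧ ((Finset.range (l + 1)).filter fun t => ω t = k).card = n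

/-! ### One-dimensional coding -/

namespace Carpet

section Coding

variable {T : Type*}

/-- The contraction ratio `∏_{k<n} ρ (z k)` of the first `n` letters of `z`. -/
noncomputable def ratio (ρ : T → ℝ) (z : ℕ → T) (n : ℕ) : ℝ := ∏ k ∈ range n, ρ (z k)

/-- The image of `0` under the composition of the first `n` maps `x ↦ ρ (z k) * x + u (z k)`;
the left end of the `n`-th cell of `z`, which is `[corner n, corner n + ratio n]`. -/
noncomputable def corner (ρ u : T → ℝ) (z : ℕ → T) (n : ℕ) : ℝ :=
  ∑ k ∈ range n, ratio ρ z k * u (z k)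

/-- The point with address `z`. -/
noncomputable def point (ρ u : T → ℝ) (z : ℕ → T) : ℝ := ∑' k, ratio ρ z k * u (z k)

/-- The maps `x ↦ ρ t * x + u t` send `[0,1]` into itself, with ratios in `[α, β] ⊆ (0,1)`. -/
structure IsCoding (ρ u : T → ℝ) (α β : ℝ) : Prop where
  pos : 0 < α
  le : ∀ t, α ≤ ρ t
  ge : ∀ t, ρ t ≤ β
  lt_one : β < 1
  nonneg : ∀ t, 0 ≤ u t
  add_le : ∀ t, u t + ρ t ≤ 1

/-- The images of `[0,1]` under the maps of the letters `s` and `t` do not overlap. -/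
def NonOverlap (ρ u : T → ℝ) (s t : T) : Prop := u s + ρ s ≤ u t ∨ u t + ρ t ≤ u s

variable {ρ u : T → ℝ} {α β : ℝ}

theorem ratio_succ (z : ℕ → T) (n : ℕ) : ratio ρ z (n + 1) = ratio ρ z n * ρ (z n) :=
  prod_range_succ _ _

theorem corner_succ (z : ℕ → T) (n : ℕ) :
    corner ρ u z (n + 1) = corner ρ u z n + ratio ρ z n * u (z n) :=
  sum_range_succ _ _

theorem ratio_congr {z z' : ℕ → T} {n : ℕ} (h : ∀ k < n, ρ (z k) = ρ (z' k)) :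
    ratio ρ z n = ratio ρ z' n :=
  prod_congr rfl fun k hk => h k (mem_range.1 hk)

theorem corner_congr {z z' : ℕ → T} {n : ℕ}
    (h : ∀ k < n, ρ (z k) = ρ (z' k) ∧ u (z k) = u (z' k)) :
    corner ρ u z n = corner ρ u z' n :=
  sum_congr rfl fun k hk => by
    rw [(h k (mem_range.1 hk)).2,
      ratio_congr fun i hi => (h i (hi.trans (mem_range.1 hk))).1]

namespace IsCoding

variable (h : IsCoding ρ u α β)
include h

theorem ρ_pos (t : T) : 0 < ρ t := h.pos.trans_le (h.le t)

theorem ratio_pos (z : ℕ → T) (n : ℕ) : 0 < ratio ρ z n := prod_pos fun _ _ => h.ρ_pos _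

theorem ratio_le_pow (z : ℕ → T) (n : ℕ) : ratio ρ z n ≤ β ^ n := by
  simpa [ratio] using prod_le_prod (s := range n) (fun k _ => (h.ρ_pos (z k)).le)
    fun k _ => h.ge (z k)

theorem β_pos (z : ℕ → T) : 0 < β := (h.ρ_pos (z 0)).trans_le (h.ge _)

theorem cell_succ (z : ℕ → T) (n : ℕ) : corner ρ u z n ≤ corner ρ u z (n + 1) ∧
    corner ρ u z (n + 1) + ratio ρ z (n + 1) ≤ corner ρ u z n + ratio ρ z n := by
  have h1 := h.ratio_pos z n
  rw [corner_succ, ratio_succ]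
  constructor
  · nlinarith [h.nonneg (z n)]
  · nlinarith [h.add_le (z n)]

theorem cell_mono (z : ℕ → T) {k n : ℕ} (hkn : k ≤ n) : corner ρ u z k ≤ corner ρ u z n ∧
    corner ρ u z n + ratio ρ z n ≤ corner ρ u z k + ratio ρ z k := by
  induction n, hkn using Nat.le_induction with
  | base => exact ⟨le_rfl, le_rfl⟩
  | succ n _ ih =>
    have := h.cell_succ z n
    exact ⟨ih.1.trans this.1, this.2.trans ih.2⟩

theorem summable (z : ℕ → T) : Summable fun k => ratio ρ z k * u (z k) := by
  refine Summable.of_nonneg_of_le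
    (fun k => mul_nonneg (h.ratio_pos z k).le (h.nonneg _)) (fun k => ?_)
    (summable_geometric_of_lt_one (h.β_pos z).le h.lt_one)
  have h1 := h.ratio_le_pow z k
  have h2 : u (z k) ≤ 1 := by linarith [h.add_le (z k), h.ρ_pos (z k)]
  have h3 := h.ratio_pos z k
  nlinarith [h.nonneg (z k)]

theorem point_mem (z : ℕ → T) (n : ℕ) :
    corner ρ u z n ≤ point ρ u z ∧ point ρ u z ≤ corner ρ u z n + ratio ρ z n := by
  have ht : Tendsto (corner ρ u z) atTop (nhds (point ρ u z)) :=
    (h.summable z).hasSum.tendsto_sum_nat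
  constructor
  · exact ge_of_tendsto ht (eventually_atTop.2 ⟨n, fun k hk => (h.cell_mono z hk).1⟩)
  · exact le_of_tendsto ht (eventually_atTop.2 ⟨n, fun k hk => by
      linarith [(h.cell_mono z hk).2, h.ratio_pos z k]⟩)

/-- Points whose addresses carry the same maps up to time `n` lie in a common `n`-th cell. -/
theorem abs_point_sub_le {z z' : ℕ → T} {n : ℕ}
    (hz : ∀ k < n, ρ (z k) = ρ (z' k) ∧ u (z k) = u (z' k)) :
    |point ρ u z - point ρ u z'| ≤ ratio ρ z n := by
  have h1 := h.point_mem z n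
  have h2 := h.point_mem z' n
  rw [← corner_congr hz, ← ratio_congr fun k hk => (hz k hk).1] at h2
  rw [abs_le]
  constructor <;> linarith

theorem abs_image_sub_point_le (z : ℕ → T) (n : ℕ) (q : ℝ) :
    |corner ρ u z n + ratio ρ z n * q - point ρ u z| ≤ β ^ n * (|q| + 1) := by
  have h1 := h.point_mem z n
  have h2 := h.ratio_le_pow z n
  have h3 := h.ratio_pos z n
  have h4 : |ratio ρ z n * q| = ratio ρ z n * |q| := by rw [abs_mul, abs_of_pos h3]
  have h5 : ratio ρ z n * |q| ≤ β ^ n * |q| := by gcongr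
  have h6 := abs_le.1 (h4.le)
  rw [abs_le]
  constructor <;> nlinarith

theorem exists_ratio_le (z : ℕ → T) {r : ℝ} (hr : 0 < r) : ∃ n, ratio ρ z n ≤ r := by
  obtain ⟨n, hn⟩ := exists_pow_lt_of_lt_one hr h.lt_one
  exact ⟨n, (h.ratio_le_pow z n).trans hn.le⟩

end IsCoding

/-- The first time at which the ratio of `z` is at most `r` (for `r > 0` and a coding, this
set of times is nonempty). -/
noncomputable def hitTime (ρ : T → ℝ) (z : ℕ → T) (r : ℝ) : ℕ := sInf {n | ratio ρ z n ≤ r}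

theorem lt_ratio_of_lt_hitTime {z : ℕ → T} {r : ℝ} {k : ℕ} (hk : k < hitTime ρ z r) :
    r < ratio ρ z k :=
  not_le.1 (Nat.notMem_of_lt_sInf hk)

theorem hitTime_le {z : ℕ → T} {r : ℝ} {k : ℕ} (hk : ratio ρ z k ≤ r) : hitTime ρ z r ≤ k :=
  Nat.sInf_le hk

namespace IsCoding

variable (h : IsCoding ρ u α β)
include h

theorem ratio_hitTime_le (z : ℕ → T) {r : ℝ} (hr : 0 < r) : ratio ρ z (hitTime ρ z r) ≤ r :=
  Nat.sInf_mem (s := {n | ratio ρ z n ≤ r}) (h.exists_ratio_le z hr)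

theorem lt_ratio_hitTime (z : ℕ → T) {r : ℝ} (hr : 0 < r) (hr1 : r < 1) :
    α * r < ratio ρ z (hitTime ρ z r) := by
  have h0 := h.ratio_hitTime_le z hr
  rcases Nat.eq_zero_or_eq_succ_pred (hitTime ρ z r) with hn | hn
  · rw [hn] at h0
    simp [ratio] at h0
    linarith
  · set n := (hitTime ρ z r).pred
    have h1 := lt_ratio_of_lt_hitTime (ρ := ρ) (z := z) (r := r) (k := n) (by omega)
    rw [hn, Nat.succ_eq_add_one, ratio_succ]
    have := h.le (z n)
    have := h.pos
    nlinarith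

/-- Two addresses whose stopped (half-open) cells share a point `w` are in the same class up to
the stopping time of the first, provided letters at equal times are either in the same class or
have non-overlapping images. -/
theorem agree_of_cell {R : Type*} {cls : T → R}
    (hcls : ∀ s t, cls s = cls t → ρ s = ρ t ∧ u s = u t)
    {z z' : ℕ → T} {r w : ℝ} (hr : 0 < r)
    (hw : corner ρ u z (hitTime ρ z r) ≤ w)
    (hw2 : w < corner ρ u z (hitTime ρ z r) + ratio ρ z (hitTime ρ z r))
    (hw' : corner ρ u z' (hitTime ρ z' r) ≤ w)
    (hw2' : w < corner ρ u z' (hitTime ρ z' r) + ratio ρ z' (hitTime ρ z' r))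
    (hno : ∀ k < hitTime ρ z r, cls (z k) = cls (z' k) ∨ NonOverlap ρ u (z k) (z' k)) :
    ∀ k < hitTime ρ z r, cls (z k) = cls (z' k) := by
  intro k
  induction k using Nat.strong_induction_on with
  | _ k ih =>
    intro hk
    have hag : ∀ i < k, ρ (z i) = ρ (z' i) ∧ u (z i) = u (z' i) := fun i hi =>
      hcls _ _ (ih i hi (hi.trans hk))
    have hk' : k < hitTime ρ z' r := by
      by_contra hcon
      push Not at hcon
      have h1 := h.ratio_hitTime_le z' hr
      rw [← ratio_congr fun i hi => (hag i (hi.trans_le hcon)).1] at h1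
      have := lt_ratio_of_lt_hitTime (ρ := ρ) (hcon.trans_lt hk)
      linarith
    refine (hno k hk).resolve_right fun hcon => ?_
    have c1 := h.cell_mono z (Nat.succ_le_of_lt hk)
    have c2 := h.cell_mono z' (Nat.succ_le_of_lt hk')
    simp only [Nat.succ_eq_add_one, corner_succ, ratio_succ] at c1 c2
    rw [← corner_congr hag, ← ratio_congr fun i hi => (hag i hi).1] at c2
    have hp := h.ratio_pos z k
    rcases hcon with hcon | hcon <;> nlinarith

/-- **Hölder estimate for a rearrangement of addresses.** If `σ` is injective and moves letters
at most by the factor `1 + ε` (up to a constant), then two addresses carrying the same maps up to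
the stopping time at scale `r` are sent by rearrangement to points at distance
`O (r ^ (1 - ε * log α / log β))`: a prefix of length `n` still determines a prefix of length at
least `n - (ε n + C)` of the rearranged address, and each of the at most `ε n + C` lost letters
costs at most a factor `α⁻¹`. -/
theorem abs_point_comp_sub_le {σ : ℕ → ℕ} (hσ : Function.Injective σ) {ε C : ℝ} (hε : 0 ≤ ε)
    (hC : 0 ≤ C) (hσC : ∀ l, (σ l : ℝ) ≤ (1 + ε) * l + C) {r : ℝ} (hr : 0 < r) (hr1 : r < 1)
    {z z' : ℕ → T}
    (hz : ∀ k < hitTime ρ z r, ρ (z k) = ρ (z' k) ∧ u (z k) = u (z' k)) :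
    |point ρ u (z ∘ σ) - point ρ u (z' ∘ σ)| ≤
      Real.exp (-Real.log α * (ε * (Real.log α / Real.log β) + C)) *
        r ^ (1 - ε * (Real.log α / Real.log β)) := by
  set n := hitTime ρ z r with hn
  set n' := ⌈((n : ℝ) - C) / (1 + ε)⌉₊ with hn'
  have hε1 : 0 < 1 + ε := by linarith
  have hlt : ∀ l < n', σ l < n := by
    intro l hl
    have h1 := Nat.lt_ceil.1 hl
    rw [lt_div_iff₀ hε1] at h1
    have h2 := hσC l
    have : (σ l : ℝ) < n := by linarith
    exact_mod_cast this
  have hsub : (range n').image σ ⊆ range n := by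
    intro k hk
    obtain ⟨l, hl, rfl⟩ := mem_image.1 hk
    exact mem_range.2 (hlt l (mem_range.1 hl))
  have hcard : (range n \ (range n').image σ).card = n - n' := by
    rw [card_sdiff_of_subset hsub, card_image_of_injective _ hσ, card_range, card_range]
  have hle : n' ≤ n := by
    have := card_le_card hsub
    rwa [card_image_of_injective _ hσ, card_range, card_range] at this
  have hlost : (n : ℝ) - n' ≤ ε * n + C := by
    have h1 : ((n : ℝ) - C) / (1 + ε) ≤ n' := Nat.le_ceil _
    have h2 : (n : ℝ) - C - ε * n ≤ ((n : ℝ) - C) / (1 + ε) := by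
      rw [le_div_iff₀ hε1]
      nlinarith [mul_nonneg hε hε, mul_nonneg (mul_nonneg hε hε) (Nat.cast_nonneg (α := ℝ) n),
        mul_nonneg hC hε]
    linarith
  have hβ := h.β_pos z
  have hα := h.pos
  have hα1 : α < 1 := ((h.le (z 0)).trans (h.ge _)).trans_lt h.lt_one
  have hlα : Real.log α < 0 := Real.log_neg hα hα1
  have hlβ : Real.log β < 0 := Real.log_neg hβ h.lt_one
  have hprod : ratio ρ (z ∘ σ) n' * α ^ (n - n') ≤ r := by
    have h1 : ratio ρ (z ∘ σ) n' = ∏ k ∈ (range n').image σ, ρ (z k) := by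
      rw [prod_image fun _ _ _ _ e => hσ e]; rfl
    have h2 : α ^ (n - n') ≤ ∏ k ∈ range n \ (range n').image σ, ρ (z k) := by
      rw [← hcard, ← prod_const]
      exact prod_le_prod (fun _ _ => hα.le) fun k _ => h.le _
    calc _ ≤ ratio ρ (z ∘ σ) n' * ∏ k ∈ range n \ (range n').image σ, ρ (z k) := by
          have := h.ratio_pos (z ∘ σ) n'
          gcongr
      _ = ratio ρ z n := by rw [h1, mul_comm, prod_sdiff hsub]; rfl
      _ ≤ r := h.ratio_hitTime_le z hr
  -- the length `n` of the prefix is at most logarithmic in the scale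
  have hnlog : (n : ℝ) * -Real.log β ≤ -Real.log α - Real.log r := by
    have h1 : α * r < β ^ n := (h.lt_ratio_hitTime z hr hr1).trans_le (h.ratio_le_pow z n)
    have h2 := Real.log_lt_log (by positivity) h1
    rw [Real.log_mul hα.ne' hr.ne', Real.log_pow] at h2
    linarith
  have hdist := h.abs_point_sub_le (z := z ∘ σ) (z' := z' ∘ σ) (n := n')
    fun k hk => hz _ (hlt k hk)
  refine hdist.trans ?_
  have h3 : ratio ρ (z ∘ σ) n' ≤ r * Real.exp (-Real.log α * (n - n')) := by
    have h4 : α ^ (n - n') = Real.exp (Real.log α * (n - n')) := by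
      rw [← Nat.cast_sub hle, mul_comm, Real.exp_nat_mul, Real.exp_log hα]
    rw [h4] at hprod
    calc _ = ratio ρ (z ∘ σ) n' * Real.exp (Real.log α * (n - n')) *
          Real.exp (-Real.log α * (n - n')) := by
          rw [mul_assoc, ← Real.exp_add]; simp
      _ ≤ _ := by gcongr
  refine h3.trans ?_
  rw [Real.rpow_def_of_pos hr, ← Real.exp_add]
  nth_rewrite 1 [← Real.exp_log hr]
  rw [← Real.exp_add, Real.exp_le_exp]
  have h5 : (n : ℝ) ≤ Real.log α / Real.log β + Real.log r / Real.log β := by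
    rw [← add_div, le_div_iff_of_neg hlβ]
    linarith
  have h6 : ε * n ≤ ε * (Real.log α / Real.log β + Real.log r / Real.log β) := by gcongr
  have h7 : -Real.log α * (n - n') ≤
      -Real.log α * (ε * (Real.log α / Real.log β + Real.log r / Real.log β) + C) :=
    mul_le_mul_of_nonneg_left (by linarith) (by linarith)
  have h8 : Real.log α * (Real.log r / Real.log β) =
      Real.log r * (Real.log α / Real.log β) := by ring
  linear_combination h7 - ε * h8

end IsCoding

end Coding

/-! ### Hausdorff dimension and correspondences -/

section Dimension

open MeasureTheory ENNReal NNReal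

variable {Z X Y : Type*}

/-- If the points of `q '' A` corresponding to a set of diameter at most `r` in `p '' A` can be
covered by boundedly many sets of diameter `O (r ^ γ)`, then `γ * dimH (q '' A) ≤ dimH (p '' A)`.
For `q = f ∘ p` with `f` Hölder continuous this is the usual estimate; here neither `p` nor the
correspondence has to be injective. -/
theorem mul_dimH_le [EMetricSpace X] [EMetricSpace Y] (A : Set Z) (p : Z → X) (q : Z → Y)
    {N : ℕ} {K γ : ℝ≥0} (hγ : 0 < γ)
    (H : ∀ r : ℝ≥0, 0 < r → r < 1 → ∀ U : Set X, ediam U ≤ r →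
      ∃ V : Fin N → Set Y, (∀ z ∈ A, p z ∈ U → ∃ i, q z ∈ V i) ∧
        ∀ i, ediam (V i) ≤ ((K * r ^ (γ : ℝ) : ℝ≥0) : ℝ≥0∞)) :
    (γ : ℝ≥0∞) * dimH (q '' A) ≤ dimH (p '' A) := by
  borelize X
  borelize Y
  by_contra! hlt
  obtain ⟨s, hs1, hs2⟩ := ENNReal.lt_iff_exists_nnreal_btwn.1 hlt
  have hs : 0 < s := by
    have := pos_of_gt hs1
    exact_mod_cast this
  have hs0 : (0 : ℝ) < s := by exact_mod_cast hs
  have hγ0 : (0 : ℝ) < γ := by exact_mod_cast hγ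
  have hzero := hausdorffMeasure_of_dimH_lt hs1
  have key : ∀ η : ℝ≥0, 0 < η → η < 1 → ∃ t : ℕ × Fin N → Set Y, q '' A ⊆ ⋃ i, t i ∧
      (∀ i, ediam (t i) ≤ ((K * (η ^ (1 / (s : ℝ))) ^ (γ : ℝ) : ℝ≥0) : ℝ≥0∞)) ∧
      ∑' i, ediam (t i) ^ ((s / γ : ℝ≥0) : ℝ) ≤
        ((N * K ^ ((s / γ : ℝ≥0) : ℝ) * η : ℝ≥0) : ℝ≥0∞) := by
    intro η hη hη1
    have hη2 : (0 : ℝ≥0∞) < ((η / 2 : ℝ≥0) : ℝ≥0∞) := by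
      exact_mod_cast (half_pos hη)
    rw [Measure.hausdorffMeasure_apply, ← nonpos_iff_eq_zero] at hzero
    have h1 := ((iSup₂_le_iff.1 hzero) 1 one_pos).trans_lt hη2
    simp only [iInf_lt_iff] at h1
    obtain ⟨t, hcov, hdiam, hsum⟩ := h1
    obtain ⟨δ, hδ, hδsum⟩ := ENNReal.exists_pos_sum_of_countable hη2.ne' ℕ
    have hfin : ∀ n, ediam (t n) ≠ ∞ := fun n => ne_top_of_le_ne_top one_ne_top (hdiam n)
    -- slightly larger positive scales, so that sets of diameter zero are treated uniformly
    set r : ℕ → ℝ≥0 := fun n => max (ediam (t n)).toNNReal (δ n ^ (1 / (s : ℝ))) with hr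
    have hrpos : ∀ n, 0 < r n := fun n => lt_max_of_lt_right (NNReal.rpow_pos (hδ n))
    have hrs : ∀ n, ((r n ^ (s : ℝ) : ℝ≥0) : ℝ≥0∞) ≤
        (⨆ _ : (t n).Nonempty, ediam (t n) ^ (s : ℝ)) + δ n := by
      intro n
      have hsup : ediam (t n) ^ (s : ℝ) ≤ ⨆ _ : (t n).Nonempty, ediam (t n) ^ (s : ℝ) := by
        rcases (t n).eq_empty_or_nonempty with he | hne
        · simp [he, hs]
        · exact le_iSup (fun _ : (t n).Nonempty => ediam (t n) ^ (s : ℝ)) hne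
      rcases max_choice (ediam (t n)).toNNReal (δ n ^ (1 / (s : ℝ))) with hm | hm
      · have : ((r n ^ (s : ℝ) : ℝ≥0) : ℝ≥0∞) = ediam (t n) ^ (s : ℝ) := by
          rw [hr]; simp only [hm]
          rw [ENNReal.coe_rpow_of_nonneg _ hs0.le, ENNReal.coe_toNNReal (hfin n)]
        rw [this]
        exact hsup.trans le_self_add
      · have : r n ^ (s : ℝ) = δ n := by
          rw [hr]; simp only [hm]
          rw [← NNReal.rpow_mul, one_div_mul_cancel hs0.ne', NNReal.rpow_one]
        rw [this]
        exact le_add_self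
    have hrsum : ∑' n, ((r n ^ (s : ℝ) : ℝ≥0) : ℝ≥0∞) ≤ η := by
      refine (ENNReal.tsum_le_tsum hrs).trans ?_
      rw [ENNReal.tsum_add]
      refine (add_le_add hsum.le hδsum.le).trans ?_
      rw [← ENNReal.coe_add, add_halves]
    have hrle : ∀ n, r n ≤ η ^ (1 / (s : ℝ)) := by
      intro n
      rw [one_div, NNReal.le_rpow_inv_iff hs0]
      exact_mod_cast (ENNReal.le_tsum n).trans hrsum
    have hr1 : ∀ n, r n < 1 := fun n =>
      (hrle n).trans_lt (NNReal.rpow_lt_one hη1 (by positivity))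
    choose V hV1 hV2 using fun n => H (r n) (hrpos n) (hr1 n) (t n)
      (by rw [← ENNReal.coe_toNNReal (hfin n)]; exact_mod_cast le_max_left _ _)
    refine ⟨fun i => V i.1 i.2, ?_, ?_, ?_⟩
    · rintro _ ⟨z, hz, rfl⟩
      obtain ⟨n, hn⟩ := Set.mem_iUnion.1 (hcov ⟨z, hz, rfl⟩)
      obtain ⟨i, hi⟩ := hV1 n z hz hn
      exact Set.mem_iUnion.2 ⟨(n, i), hi⟩
    · intro i
      refine (hV2 i.1 i.2).trans ?_
      have := hrle i.1
      exact_mod_cast mul_le_mul_of_nonneg_left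
        (NNReal.rpow_le_rpow this hγ0.le) (zero_le)
    · have hb : ∀ i : ℕ × Fin N, ediam (V i.1 i.2) ^ ((s / γ : ℝ≥0) : ℝ) ≤
          ((K ^ ((s / γ : ℝ≥0) : ℝ) : ℝ≥0) : ℝ≥0∞) * ((r i.1 ^ (s : ℝ) : ℝ≥0) : ℝ≥0∞) := by
        intro i
        refine (ENNReal.rpow_le_rpow (hV2 i.1 i.2) (NNReal.coe_nonneg _)).trans ?_
        rw [← ENNReal.coe_rpow_of_nonneg _ (NNReal.coe_nonneg _), NNReal.mul_rpow,
          ← NNReal.rpow_mul, ← ENNReal.coe_mul]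
        have : (γ : ℝ) * ((s / γ : ℝ≥0) : ℝ) = s := by
          push_cast; field_simp
        rw [this]
      refine (ENNReal.tsum_le_tsum hb).trans ?_
      rw [ENNReal.tsum_mul_left,
        ENNReal.tsum_prod (f := fun n (_ : Fin N) => ((r n ^ (s : ℝ) : ℝ≥0) : ℝ≥0∞))]
      simp only [tsum_fintype, sum_const, card_univ, Fintype.card_fin, nsmul_eq_mul]
      rw [ENNReal.tsum_mul_left]
      push_cast
      rw [← mul_assoc, mul_comm (_ : ℝ≥0∞) (N : ℝ≥0∞)]
      gcongr
  -- apply the covers at the scales `η = 1 / (j + 2)`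
  set η : ℕ → ℝ≥0 := fun j => 1 / ((j : ℝ≥0) + 1 + 1) with hηdef
  have hηpos : ∀ j, 0 < η j := fun j => by positivity
  have hη1 : ∀ j, η j < 1 := fun j => by
    rw [hηdef]; simp only
    rw [div_lt_one (by positivity)]
    have : (0 : ℝ≥0) ≤ j := zero_le
    calc (1 : ℝ≥0) < 1 + 1 := by norm_num
      _ ≤ _ := by gcongr; exact le_add_self
  have hη0 : Tendsto η atTop (nhds 0) := by
    have := (tendsto_one_div_add_atTop_nhds_zero_nat (𝕜 := ℝ≥0)).comp (tendsto_add_atTop_nat 1)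
    refine this.congr fun j => ?_
    simp [hηdef]
  choose t ht1 ht2 ht3 using fun j => key (η j) (hηpos j) (hη1 j)
  have hr0 : Tendsto (fun j => ((K * (η j ^ (1 / (s : ℝ))) ^ (γ : ℝ) : ℝ≥0) : ℝ≥0∞)) atTop
      (nhds 0) := by
    rw [← ENNReal.coe_zero, ENNReal.tendsto_coe]
    have h1 : Tendsto (fun j => η j ^ (1 / (s : ℝ))) atTop (nhds 0) := by
      have := hη0.nnrpow (tendsto_const_nhds (x := 1 / (s : ℝ))) (Or.inr (by positivity))
      rwa [NNReal.zero_rpow (by positivity)] at this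
    have h2 := h1.nnrpow (tendsto_const_nhds (x := (γ : ℝ))) (Or.inr hγ0)
    rw [NNReal.zero_rpow hγ0.ne'] at h2
    simpa using h2.const_mul K
  have hle := Measure.hausdorffMeasure_le_liminf_tsum ((s / γ : ℝ≥0) : ℝ) (q '' A) _ hr0 t
    (Eventually.of_forall ht2) (Eventually.of_forall ht1)
  have hlim : Tendsto (fun j => ∑' i, ediam (t j i) ^ ((s / γ : ℝ≥0) : ℝ)) atTop (nhds 0) := by
    refine tendsto_of_tendsto_of_tendsto_of_le_of_le tendsto_const_nhds ?_
      (fun _ => zero_le) ht3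
    rw [← ENNReal.coe_zero, ENNReal.tendsto_coe]
    simpa using hη0.const_mul (N * K ^ ((s / γ : ℝ≥0) : ℝ))
  rw [hlim.liminf_eq] at hle
  have hdim : dimH (q '' A) ≤ ((s / γ : ℝ≥0) : ℝ≥0∞) :=
    dimH_le_of_hausdorffMeasure_ne_top (ne_top_of_le_ne_top zero_ne_top hle)
  refine absurd hs2 (not_lt.2 ?_)
  calc (γ : ℝ≥0∞) * dimH (q '' A) ≤ γ * ((s / γ : ℝ≥0) : ℝ≥0∞) := by gcongr
    _ = s := by rw [← ENNReal.coe_mul, mul_div_cancel₀ _ hγ.ne']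

end Dimension

/-! ### Comparison of carpets under rearrangement -/

section Compare

open NNReal

variable {T R κ : Type*}

/-- The combinatorial data of a family of Lalley–Gatzouras schemes, with all alphabets merged into
a single type `T`: `key t` is the scheme to which the letter `t` belongs, `row t` its row, and the
map of `t` is `(x, y) ↦ (a t * x + c t, b t * y + d t)`. Rows of one scheme have non-overlapping
vertical ranges, and letters of one row have non-overlapping horizontal ranges. -/
structure IsCarpet (a b c d : T → ℝ) (key : T → κ) (row : T → R) (α β : ℝ) : Prop where
  horiz : IsCoding a c α β
  vert : IsCoding b d α β
  le : ∀ t, a t ≤ b t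
  row_congr : ∀ s t, row s = row t → b s = b t ∧ d s = d t
  row_sep : ∀ s t, key s = key t → row s = row t ∨ NonOverlap b d s t
  col_sep : ∀ s t, row s = row t → s = t ∨ NonOverlap a c s t

/-- The symbolic space of `ω`, as a set of sequences in the merged alphabet. -/
def addr (key : T → κ) (ω : ℕ → κ) : Set (ℕ → T) := {z | ∀ l, key (z l) = ω l}

/-- The point of the plane with address `z`. -/
noncomputable def planePoint (a b c d : T → ℝ) (z : ℕ → T) : ℝ × ℝ := (point a c z, point b d z)

/-- The position of the stopped cell of `z` on a grid of mesh `α * r`: the index of a grid point in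
the half-open cell, see `IsCoding.cellIndex_mem`. -/
noncomputable def cellIndex (ρ u : T → ℝ) (α : ℝ) (z : ℕ → T) (r : ℝ) : ℤ :=
  ⌈corner ρ u z (hitTime ρ z r) / (α * r)⌉

namespace IsCoding

variable {ρ u : T → ℝ} {α β : ℝ} (h : IsCoding ρ u α β)
include h

theorem cellIndex_mem (z : ℕ → T) {r : ℝ} (hr : 0 < r) (hr1 : r < 1) :
    corner ρ u z (hitTime ρ z r) ≤ cellIndex ρ u α z r * (α * r) ∧
      cellIndex ρ u α z r * (α * r) <
        corner ρ u z (hitTime ρ z r) + ratio ρ z (hitTime ρ z r) := by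
  have hαr : 0 < α * r := mul_pos h.pos hr
  have h1 := Int.le_ceil (corner ρ u z (hitTime ρ z r) / (α * r))
  have h2 := Int.ceil_lt_add_one (corner ρ u z (hitTime ρ z r) / (α * r))
  rw [div_le_iff₀ hαr] at h1
  rw [← sub_lt_iff_lt_add, lt_div_iff₀ hαr] at h2
  have h3 := h.lt_ratio_hitTime z hr hr1
  rw [cellIndex]
  constructor <;> linarith

theorem exists_cellIndex_eq (z : ℕ → T) {r x : ℝ} (hr : 0 < r)
    (hx : |point ρ u z - x| ≤ r) :
    ∃ i : Fin (⌈3 / α⌉₊ + 1), cellIndex ρ u α z r = ⌈(x - 2 * r) / (α * r)⌉ + (i : ℕ) := by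
  have hαr : 0 < α * r := mul_pos h.pos hr
  have h1 := h.point_mem z (hitTime ρ z r)
  have h2 := h.ratio_hitTime_le z hr
  have h3 := abs_le.1 hx
  have hlow : ⌈(x - 2 * r) / (α * r)⌉ ≤ cellIndex ρ u α z r :=
    Int.ceil_le_ceil (by gcongr; linarith)
  have hup : corner ρ u z (hitTime ρ z r) / (α * r) ≤ (x - 2 * r) / (α * r) + 3 / α := by
    have : 3 / α = 3 * r / (α * r) := by field_simp
    rw [this, ← add_div]
    gcongr
    linarith
  obtain ⟨n, hn⟩ := Int.eq_ofNat_of_zero_le (sub_nonneg.2 hlow)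
  refine ⟨⟨n, ?_⟩, by simp only; omega⟩
  have h4 : (cellIndex ρ u α z r : ℝ) < corner ρ u z (hitTime ρ z r) / (α * r) + 1 :=
    Int.ceil_lt_add_one _
  have h5 := Int.le_ceil ((x - 2 * r) / (α * r))
  have h6 : (cellIndex ρ u α z r : ℝ) - ⌈(x - 2 * r) / (α * r)⌉ = n := by exact_mod_cast hn
  have h7 : 3 / α ≤ ⌈3 / α⌉₊ := Nat.le_ceil _
  have h8 : (n : ℝ) < ⌈3 / α⌉₊ + 1 := by linarith
  exact_mod_cast h8

end IsCoding

variable {a b c d : T → ℝ} {key : T → κ} {row : T → R} {α β : ℝ}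

/-- Addresses over the same `ω` whose stopped approximate squares have the same grid position
agree in their letters up to the horizontal stopping time, and in their rows up to the vertical
one. -/
theorem IsCarpet.agree (h : IsCarpet a b c d key row α β) {ω : ℕ → κ} {z z' : ℕ → T}
    (hz : z ∈ addr key ω) (hz' : z' ∈ addr key ω) {r : ℝ} (hr : 0 < r) (hr1 : r < 1)
    (h1 : cellIndex a c α z r = cellIndex a c α z' r)
    (h2 : cellIndex b d α z r = cellIndex b d α z' r) :
    (∀ k < hitTime a z r, z k = z' k) ∧ ∀ k < hitTime b z r, row (z k) = row (z' k) := by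
  have hv := h.vert.cellIndex_mem z hr hr1
  have hv' := h.vert.cellIndex_mem z' hr hr1
  rw [← h2] at hv'
  have hh := h.horiz.cellIndex_mem z hr hr1
  have hh' := h.horiz.cellIndex_mem z' hr hr1
  rw [← h1] at hh'
  have hrow := h.vert.agree_of_cell h.row_congr hr hv.1 hv.2 hv'.1 hv'.2
    fun k _ => h.row_sep _ _ ((hz k).trans (hz' k).symm)
  have htime : hitTime a z r ≤ hitTime b z r := hitTime_le <|
    (prod_le_prod (fun k _ => (h.horiz.ρ_pos (z k)).le) fun k _ => h.le (z k)).trans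
      (h.vert.ratio_hitTime_le z hr)
  refine ⟨h.horiz.agree_of_cell (cls := id) ?_ hr hh.1 hh.2 hh'.1 hh'.2
    fun k hk => h.col_sep _ _ (hrow k (hk.trans_le htime)), hrow⟩
  rintro s _ rfl
  exact ⟨rfl, rfl⟩

/-- A rearrangement of addresses distorting positions by at most the factor `1 + ε` raises the
Hausdorff dimension by at most the factor `(1 - ε * log α / log β)⁻¹`. -/
theorem IsCarpet.mul_dimH_comp_le (h : IsCarpet a b c d key row α β) (ω : ℕ → κ) {σ : ℕ → ℕ}
    (hσ : Function.Injective σ) {ε C : ℝ} (hε : 0 ≤ ε) (hC : 0 ≤ C)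
    (hσC : ∀ l, (σ l : ℝ) ≤ (1 + ε) * l + C) {γ : ℝ≥0} (hγ : 0 < γ)
    (hγε : (γ : ℝ) = 1 - ε * (Real.log α / Real.log β)) :
    (γ : ENNReal) * dimH ((fun z => planePoint a b c d (z ∘ σ)) '' addr key ω) ≤
      dimH (planePoint a b c d '' addr key ω) := by
  set M := ⌈3 / α⌉₊ + 1 with hM
  set K : ℝ := Real.exp (-Real.log α * (ε * (Real.log α / Real.log β) + C)) with hK
  refine mul_dimH_le (N := M * M) (K := ⟨K, (Real.exp_pos _).le⟩) _ _ _ hγ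
    fun r hr hr1 U hU => ?_
  have hr' : (0 : ℝ) < r := by exact_mod_cast hr
  have hr1' : (r : ℝ) < 1 := by exact_mod_cast hr1
  by_cases hne : ∃ z₀ ∈ addr key ω, planePoint a b c d z₀ ∈ U
  swap
  · push Not at hne
    exact ⟨fun _ => ∅, fun z hz hzU => absurd hzU (hne z hz), fun i => by simp⟩
  obtain ⟨z₀, -, hz₀⟩ := hne
  have hclose : ∀ z, planePoint a b c d z ∈ U →
      |point a c z - point a c z₀| ≤ r ∧ |point b d z - point b d z₀| ≤ r := by
    intro z hz
    have h1 := edist_le_of_ediam_le hz hz₀ hU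
    rw [edist_le_coe, ← NNReal.coe_le_coe, coe_nndist, Prod.dist_eq] at h1
    exact max_le_iff.1 h1
  set V : Fin M × Fin M → Set (ℝ × ℝ) := fun ij =>
    (fun z => planePoint a b c d (z ∘ σ)) '' {z | z ∈ addr key ω ∧
      cellIndex a c α z r = ⌈(point a c z₀ - 2 * r) / (α * r)⌉ + (ij.1 : ℕ) ∧
      cellIndex b d α z r = ⌈(point b d z₀ - 2 * r) / (α * r)⌉ + (ij.2 : ℕ)} with hV
  refine ⟨fun i => V (finProdFinEquiv.symm i), fun z hz hzU => ?_, fun i => ?_⟩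
  · obtain ⟨i, hi⟩ := h.horiz.exists_cellIndex_eq z hr' (hclose z hzU).1
    obtain ⟨j, hj⟩ := h.vert.exists_cellIndex_eq z hr' (hclose z hzU).2
    refine ⟨finProdFinEquiv (i, j), z, ⟨hz, ?_, ?_⟩, rfl⟩
    · simpa using hi
    · simpa using hj
  · refine ediam_le ?_
    rintro _ ⟨z, ⟨hz, hz1, hz2⟩, rfl⟩ _ ⟨z', ⟨hz', hz1', hz2'⟩, rfl⟩
    obtain ⟨hag, hrow⟩ := h.agree hz hz' hr' hr1' (hz1.trans hz1'.symm) (hz2.trans hz2'.symm)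
    rw [edist_le_coe, ← NNReal.coe_le_coe, coe_nndist, Prod.dist_eq]
    push_cast
    rw [hγε]
    refine max_le ?_ ?_
    · exact h.horiz.abs_point_comp_sub_le hσ hε hC hσC hr' hr1' fun k hk => by simp [hag k hk]
    · exact h.vert.abs_point_comp_sub_le hσ hε hC hσC hr' hr1'
        fun k hk => h.row_congr _ _ (hrow k hk)

end Compare

/-! ### Matching the appearances of symbols in two sequences -/

section Relocate

variable {m : ℕ}

/-- If position `l` carries the `n`-th appearance of a symbol in `ω'`, then `relocate ω ω' l` is
the position of the `n`-th appearance of that symbol in `ω`. -/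
noncomputable def relocate (ω ω' : ℕ → Fin m) (l : ℕ) : ℕ :=
  Nat.nth (fun n => ω n = ω' l) (Nat.count (fun n => ω' n = ω' l) l)

variable {ω ω' : ℕ → Fin m}

theorem apply_relocate (hω : ∀ k, {n | ω n = k}.Infinite) (l : ℕ) :
    ω (relocate ω ω' l) = ω' l :=
  Nat.nth_mem_of_infinite (hω (ω' l)) _

theorem relocate_relocate (hω : ∀ k, {n | ω n = k}.Infinite) (l : ℕ) :
    relocate ω' ω (relocate ω ω' l) = l := by
  conv_lhs => rw [relocate, apply_relocate hω, relocate, Nat.count_nth_of_infinite (hω (ω' l))]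
  exact Nat.nth_count (p := fun n => ω' n = ω' l) rfl

theorem exists_count_bound {k : Fin m} {P : ℝ} (hf : HasLimitFreq ω k P) {δ : ℝ} (hδ : 0 < δ) :
    ∃ C, 0 ≤ C ∧ ∀ n : ℕ, |(Nat.count (fun l => ω l = k) n : ℝ) - P * n| ≤ δ * n + C := by
  obtain ⟨n₀, hn₀⟩ := Metric.tendsto_atTop.1 hf δ hδ
  refine ⟨n₀ * (1 + |P|), by positivity, fun n => ?_⟩
  rcases lt_or_ge n n₀ with hn | hn
  · have h1 : (Nat.count (fun l => ω l = k) n : ℝ) ≤ n := by exact_mod_cast Nat.count_le _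
    have h2 : (n : ℝ) ≤ n₀ := by exact_mod_cast hn.le
    calc |(Nat.count (fun l => ω l = k) n : ℝ) - P * n|
        ≤ |(Nat.count (fun l => ω l = k) n : ℝ)| + |P * n| := abs_sub _ _
      _ = Nat.count (fun l => ω l = k) n + |P| * n := by
          rw [abs_mul, Nat.abs_cast, Nat.abs_cast]
      _ ≤ n₀ + |P| * n₀ := by gcongr; exact_mod_cast h1.trans h2
      _ ≤ δ * n + n₀ * (1 + |P|) := by nlinarith [mul_nonneg hδ.le (Nat.cast_nonneg (α := ℝ) n)]
  · rcases Nat.eq_zero_or_pos n with rfl | hpos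
    · simp; positivity
    · have h1 := hn₀ n hn
      have h2 : (0 : ℝ) < n := by exact_mod_cast hpos
      rw [Real.dist_eq, ← Nat.count_eq_card_filter_range] at h1
      have h3 : (Nat.count (fun l => ω l = k) n : ℝ) - P * n =
          ((Nat.count (fun l => ω l = k) n : ℝ) / n - P) * n := by field_simp
      rw [h3, abs_mul, abs_of_pos h2]
      have : (0 : ℝ) ≤ n₀ * (1 + |P|) := by positivity
      nlinarith

theorem infinite_of_hasLimitFreq {k : Fin m} {P : ℝ} (hP : 0 < P) (hf : HasLimitFreq ω k P) :
    {n | ω n = k}.Infinite := by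
  intro hfin
  obtain ⟨C, -, hC⟩ := exists_count_bound hf (half_pos hP)
  obtain ⟨n, hn⟩ := exists_nat_gt ((C + hfin.toFinset.card) / (P / 2))
  rw [div_lt_iff₀ (half_pos hP)] at hn
  have h1 : Nat.count (fun l => ω l = k) n ≤ hfin.toFinset.card := by
    rw [Nat.count_eq_card_filter_range]
    exact card_le_card fun l hl => by simpa using (mem_filter.1 hl).2
  have h2 : (Nat.count (fun l => ω l = k) n : ℝ) ≤ hfin.toFinset.card := by exact_mod_cast h1
  have := (abs_le.1 (hC n)).1
  linarith

/-- If the frequencies of `ω'` exceed those of `ω` by less than the factor `1 + ε`, then matching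
appearances moves positions by at most the factor `1 + ε`, up to a constant. -/
theorem exists_relocate_le {P Q : Fin m → ℝ} {ε : ℝ} (hε : 0 ≤ ε) (hP : ∀ k, 0 < P k)
    (hQ : ∀ k, 0 < Q k) (hQP : ∀ k, Q k < (1 + ε) * P k)
    (hω : ∀ k, HasLimitFreq ω k (P k)) (hω' : ∀ k, HasLimitFreq ω' k (Q k)) :
    ∃ C, 0 ≤ C ∧ ∀ l, (relocate ω ω' l : ℝ) ≤ (1 + ε) * l + C := by
  have key : ∀ k, ∃ C, 0 ≤ C ∧ ∀ l, ω' l = k → (relocate ω ω' l : ℝ) ≤ (1 + ε) * l + C := by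
    intro k
    -- chosen so that `Q k + δ = (1 + ε) * (P k - δ)`
    set δ := ((1 + ε) * P k - Q k) / (2 + ε) with hδ
    have hδ0 : 0 < δ := div_pos (sub_pos.2 (hQP k)) (by linarith)
    have hδeq : Q k + δ = (1 + ε) * (P k - δ) := by
      rw [hδ]; field_simp; ring
    have hPδ : 0 < P k - δ := by
      have : 0 < (1 + ε) * (P k - δ) := by linarith [hQ k]
      exact pos_of_mul_pos_right this (by linarith)
    obtain ⟨C₁, hC₁, h₁⟩ := exists_count_bound (hω k) hδ0
    obtain ⟨C₂, hC₂, h₂⟩ := exists_count_bound (hω' k) hδ0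
    refine ⟨(C₁ + C₂) / (P k - δ), by positivity, fun l hl => ?_⟩
    have hcount : Nat.count (fun n => ω n = k) (relocate ω ω' l) =
        Nat.count (fun n => ω' n = k) l := by
      subst hl
      exact Nat.count_nth_of_infinite (infinite_of_hasLimitFreq (hP _) (hω _)) _
    have h3 := (abs_le.1 (h₁ (relocate ω ω' l))).1
    have h4 := (abs_le.1 (h₂ l)).2
    rw [hcount] at h3
    rw [← sub_le_iff_le_add', le_div_iff₀ hPδ]
    have h5 : (1 + ε) * (P k - δ) * (l : ℝ) = (Q k + δ) * l := by rw [hδeq]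
    nlinarith
  choose C hC0 hC using key
  refine ⟨∑ k, C k, sum_nonneg fun k _ => hC0 k, fun l => (hC (ω' l) l rfl).trans ?_⟩
  have := single_le_sum (f := C) (fun k _ => hC0 k) (mem_univ (ω' l))
  linarith

end Relocate

section Compare

variable {m : ℕ} {T R : Type*} {a b c d : T → ℝ} {key : T → Fin m} {row : T → R} {α β : ℝ}

open NNReal in
/-- Comparison of the coded sets of two sequences with nearby frequencies. Matching the appearances
of each symbol is a bijection of the positions, so rearrangement by it maps the symbolic space of
`ω` onto that of `ω'`. -/
theorem IsCarpet.mul_dimH_le (h : IsCarpet a b c d key row α β) {ω ω' : ℕ → Fin m}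
    {P Q : Fin m → ℝ} {ε : ℝ} (hε : 0 ≤ ε) (hP : ∀ k, 0 < P k)
    (hQ : ∀ k, 0 < Q k) (hQP : ∀ k, Q k < (1 + ε) * P k)
    (hω : ∀ k, HasLimitFreq ω k (P k)) (hω' : ∀ k, HasLimitFreq ω' k (Q k))
    {γ : ℝ≥0} (hγ : 0 < γ) (hγε : (γ : ℝ) = 1 - ε * (Real.log α / Real.log β)) :
    (γ : ENNReal) * dimH (planePoint a b c d '' addr key ω') ≤
      dimH (planePoint a b c d '' addr key ω) := by
  obtain ⟨C, hC, hσC⟩ := exists_relocate_le hε hP hQ hQP hω hω'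
  have hinf := fun k => infinite_of_hasLimitFreq (hP k) (hω k)
  have hinf' := fun k => infinite_of_hasLimitFreq (hQ k) (hω' k)
  have hσ : Function.LeftInverse (relocate ω' ω) (relocate ω ω') := relocate_relocate hinf
  have himage : planePoint a b c d '' addr key ω' =
      (fun z => planePoint a b c d (z ∘ relocate ω ω')) '' addr key ω := by
    apply Set.Subset.antisymm
    · rintro _ ⟨z, hz, rfl⟩
      refine ⟨z ∘ relocate ω' ω, fun l => (hz _).trans (apply_relocate hinf' l), ?_⟩
      simp only [Function.comp_assoc, hσ.comp_eq_id, Function.comp_id]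
    · rintro _ ⟨z, hz, rfl⟩
      exact ⟨z ∘ relocate ω ω', fun l => (hz _).trans (apply_relocate hinf l), rfl⟩
  rw [himage]
  exact h.mul_dimH_comp_le ω hσ.injective hε hC hσC hγ hγε

end Compare
/-! ### The limit set and its coding -/

section LimitSet

/-- Consecutive intervals `[u i, u i + v i]` in `[0,1]` are pairwise ordered. -/
theorem chain_order {n : ℕ} (hn : 0 < n) {u v : Fin n → ℝ} (hv : ∀ i, 0 < v i)
    (h0 : 0 ≤ u ⟨0, hn⟩) (hs : ∀ (i : Fin n) (h : (i : ℕ) + 1 < n), v i + u i ≤ u ⟨i + 1, h⟩)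
    (hl : u ⟨n - 1, Nat.sub_lt hn Nat.one_pos⟩ ≤ 1 - v ⟨n - 1, Nat.sub_lt hn Nat.one_pos⟩) :
    (∀ i, 0 ≤ u i) ∧ (∀ i, u i + v i ≤ 1) ∧ ∀ i j, i < j → u i + v i ≤ u j := by
  have hmain : ∀ i j, i < j → u i + v i ≤ u j := by
    rintro i ⟨j, hj⟩ hij
    have hij' : (i : ℕ) + 1 ≤ j := hij
    induction j, hij' using Nat.le_induction with
    | base => linarith [hs i hj]
    | succ k hk ih =>
      have h1 := ih (by omega) (Fin.lt_def.2 (by simpa using hk))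
      have h2 := hs ⟨k, by omega⟩ hj
      have h3 := hv ⟨k, by omega⟩
      simp only at h2
      linarith
  refine ⟨fun i => ?_, fun i => ?_, hmain⟩
  · rcases eq_or_ne i ⟨0, hn⟩ with rfl | hi
    · exact h0
    · have hpos : (⟨0, hn⟩ : Fin n) < i := Fin.lt_def.2 (Nat.pos_of_ne_zero fun h => hi (Fin.ext h))
      linarith [hmain _ _ hpos, hv ⟨0, hn⟩]
  · rcases eq_or_ne i ⟨n - 1, Nat.sub_lt hn Nat.one_pos⟩ with rfl | hi
    · linarith
    · have hlt : i < ⟨n - 1, Nat.sub_lt hn Nat.one_pos⟩ := by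
        refine Fin.lt_def.2 ?_
        have : (i : ℕ) ≠ n - 1 := fun h => hi (Fin.ext h)
        have := i.2
        simp only
        omega
      linarith [hmain _ _ hlt, hv ⟨n - 1, Nat.sub_lt hn Nat.one_pos⟩]

variable {m : ℕ} (S : Fin m → LGScheme)

/-- The disjoint union of the alphabets of the schemes. -/
abbrev Letter : Type := (k : Fin m) × (i : Fin (S k).m₁) × Fin ((S k).m₂ i)

/-- Horizontal ratio of a letter. -/
def la (t : Letter S) : ℝ := (S t.1).a t.2.1 t.2.2
/-- Vertical ratio of a letter. -/
def lb (t : Letter S) : ℝ := (S t.1).b t.2.1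
/-- Horizontal translation of a letter. -/
def lc (t : Letter S) : ℝ := (S t.1).c t.2.1 t.2.2
/-- Vertical translation of a letter. -/
def ld (t : Letter S) : ℝ := (S t.1).d t.2.1
/-- The row of a letter, as an element of the disjoint union of the rows of the schemes. -/
def lrow (t : Letter S) : (k : Fin m) × Fin (S k).m₁ := ⟨t.1, t.2.1⟩

/-- The set of points coded by the addresses over `ω`; see `isLimitSet_iff`. -/
def coded (ω : ℕ → Fin m) : Set (ℝ × ℝ) :=
  planePoint (la S) (lb S) (lc S) (ld S) '' addr Sigma.fst ω

theorem LGScheme.b_pos (S : LGScheme) (i : Fin S.m₁) : 0 < S.b i :=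
  (S.ha_pos i ⟨0, S.hm₂ i⟩).trans_le (S.hab _ _)

/-- Here `α` is the smallest horizontal ratio and `β` the largest vertical one among the finitely
many letters. -/
theorem exists_isCarpet (hm : 0 < m) :
    ∃ α β, IsCarpet (la S) (lb S) (lc S) (ld S) (Sigma.fst : Letter S → Fin m) (lrow S) α β := by
  have hne : Nonempty (Letter S) := ⟨⟨⟨0, hm⟩, ⟨0, (S _).hm₁⟩, ⟨0, (S _).hm₂ _⟩⟩⟩
  obtain ⟨tα, hα⟩ := Finite.exists_min (la S)
  obtain ⟨tβ, hβ⟩ := Finite.exists_max (lb S)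
  have hab : ∀ t, la S t ≤ lb S t := fun t => (S t.1).hab _ _
  have hx := fun (k : Fin m) (i : Fin (S k).m₁) => chain_order ((S k).hm₂ i) ((S k).ha_pos i)
    ((S k).hc_first i) ((S k).hc_step i) ((S k).hc_last i)
  have hy := fun k : Fin m => chain_order (S k).hm₁ (LGScheme.b_pos (S k))
    (S k).hd_first (S k).hd_step (S k).hd_last
  refine ⟨la S tα, lb S tβ, ⟨?_, hα, fun t => (hab t).trans (hβ t), (S tβ.1).hb_lt_one _,
      fun t => (hx t.1 t.2.1).1 _, fun t => (hx t.1 t.2.1).2.1 _⟩,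
    ⟨?_, fun t => (hα t).trans (hab t), hβ, (S tβ.1).hb_lt_one _,
      fun t => (hy t.1).1 _, fun t => (hy t.1).2.1 _⟩, hab, ?_, ?_, ?_⟩
  · exact (S tα.1).ha_pos _ _
  · exact (S tα.1).ha_pos _ _
  · rintro ⟨k, i, j⟩ ⟨k', i', j'⟩ h
    simp only [lrow, Sigma.mk.injEq] at h
    obtain ⟨rfl, h⟩ := h
    obtain rfl := eq_of_heq h
    exact ⟨rfl, rfl⟩
  · rintro ⟨k, i, j⟩ ⟨k', i', j'⟩ h
    obtain rfl : k = k' := h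
    rcases lt_trichotomy i i' with hlt | rfl | hlt
    · exact Or.inr (Or.inl ((hy k).2.2 _ _ hlt))
    · exact Or.inl rfl
    · exact Or.inr (Or.inr ((hy k).2.2 _ _ hlt))
  · rintro ⟨k, i, j⟩ ⟨k', i', j'⟩ h
    simp only [lrow, Sigma.mk.injEq] at h
    obtain ⟨rfl, h⟩ := h
    obtain rfl := eq_of_heq h
    rcases lt_trichotomy j j' with hlt | rfl | hlt
    · exact Or.inr (Or.inl ((hx k i).2.2 _ _ hlt))
    · exact Or.inl rfl
    · exact Or.inr (Or.inr ((hx k i).2.2 _ _ hlt))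

theorem mem_hutch_iff {k : Fin m} {A : Set (ℝ × ℝ)} {p : ℝ × ℝ} :
    p ∈ (S k).hutch A ↔ ∃ t : Letter S, t.1 = k ∧ ∃ q ∈ A,
      p = (la S t * q.1 + lc S t, lb S t * q.2 + ld S t) := by
  simp only [LGScheme.hutch, Set.mem_iUnion]
  constructor
  · rintro ⟨s, q, hq, rfl⟩
    exact ⟨⟨k, s⟩, rfl, q, hq, rfl⟩
  · rintro ⟨⟨k', s⟩, rfl, q, hq, rfl⟩
    exact ⟨s, q, hq, rfl⟩

theorem addr_nonempty (ω : ℕ → Fin m) : (addr (Sigma.fst : Letter S → Fin m) ω).Nonempty :=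
  ⟨fun l => ⟨ω l, ⟨0, (S _).hm₁⟩, ⟨0, (S _).hm₂ _⟩⟩, fun _ => rfl⟩

/-- The `n`-th approximation of the limit set is the union of the images of `A` under the
compositions of `n` maps along addresses over `ω`. -/
theorem mem_foldr_iff (ω : ℕ → Fin m) (n : ℕ) (A : Set (ℝ × ℝ)) (p : ℝ × ℝ) :
    p ∈ (List.range n).foldr (fun k B => (S (ω k)).hutch B) A ↔
      ∃ z ∈ addr (Sigma.fst : Letter S → Fin m) ω, ∃ q ∈ A,
        p = (corner (la S) (lc S) z n + ratio (la S) z n * q.1,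
          corner (lb S) (ld S) z n + ratio (lb S) z n * q.2) := by
  induction n generalizing A p with
  | zero =>
    obtain ⟨z, hz⟩ := addr_nonempty S ω
    simp only [List.range_zero, List.foldr_nil, corner, ratio, range_zero, sum_empty, prod_empty,
      zero_add, one_mul]
    exact ⟨fun hp => ⟨z, hz, p, hp, rfl⟩, fun ⟨_, _, q, hq, h⟩ => h ▸ hq⟩
  | succ n ih =>
    rw [List.range_succ, List.foldr_append, List.foldr_cons, List.foldr_nil, ih]
    constructor
    · rintro ⟨z, hz, q', hq', rfl⟩
      obtain ⟨t, ht, q, hq, rfl⟩ := (mem_hutch_iff S).1 hq'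
      have hk : ∀ k < n, z k = Function.update z n t k := fun k hk => by
        rw [Function.update_of_ne hk.ne]
      refine ⟨Function.update z n t, fun l => ?_, q, hq, ?_⟩
      · rcases eq_or_ne l n with rfl | hl
        · simpa using ht
        · rw [Function.update_of_ne hl]; exact hz l
      · rw [corner_succ, corner_succ, ratio_succ, ratio_succ, Function.update_self,
          corner_congr (z := Function.update z n t) (z' := z) (ρ := la S) (u := lc S) fun k h => by
            rw [← hk k h]; exact ⟨rfl, rfl⟩,
          corner_congr (z := Function.update z n t) (z' := z) (ρ := lb S) (u := ld S) fun k h => by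
            rw [← hk k h]; exact ⟨rfl, rfl⟩,
          ratio_congr (z := Function.update z n t) (z' := z) (ρ := la S) fun k h => by
            rw [← hk k h],
          ratio_congr (z := Function.update z n t) (z' := z) (ρ := lb S) fun k h => by
            rw [← hk k h]]
        ext <;> simp only <;> ring
    · rintro ⟨z, hz, q, hq, rfl⟩
      refine ⟨z, hz, _, (mem_hutch_iff S).2 ⟨z n, hz n, q, hq, rfl⟩, ?_⟩
      rw [corner_succ, corner_succ, ratio_succ, ratio_succ]
      ext <;> simp only <;> ring

theorem continuous_point {T : Type*} [TopologicalSpace T] [DiscreteTopology T] {ρ u : T → ℝ}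
    {α β : ℝ} (h : IsCoding ρ u α β) (hβ : 0 < β) : Continuous (point ρ u) := by
  have hcont : ∀ (f : T → ℝ) (k : ℕ), Continuous fun z : ℕ → T => f (z k) := fun f k =>
    continuous_of_discreteTopology.comp (continuous_apply k)
  refine continuous_tsum (u := fun k => β ^ k)
    (fun k => (continuous_finsetProd _ fun i _ => hcont ρ i).mul (hcont u k))
    (summable_geometric_of_lt_one hβ.le h.lt_one) fun k z => ?_
  have h2 : u (z k) ≤ 1 := by linarith [h.add_le (z k), h.ρ_pos (z k)]
  rw [Real.norm_of_nonneg (mul_nonneg (h.ratio_pos z k).le (h.nonneg _))]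
  calc ratio ρ z k * u (z k) ≤ ratio ρ z k * 1 :=
        mul_le_mul_of_nonneg_left h2 (h.ratio_pos z k).le
    _ ≤ β ^ k := by rw [mul_one]; exact h.ratio_le_pow z k

theorem isCompact_coded (hm : 0 < m) (ω : ℕ → Fin m) : IsCompact (coded S ω) := by
  obtain ⟨α, β, h⟩ := exists_isCarpet S hm
  let _ : TopologicalSpace (Letter S) := ⊥
  have _ : DiscreteTopology (Letter S) := ⟨rfl⟩
  obtain ⟨z, -⟩ := addr_nonempty S ω
  have hβ := h.horiz.β_pos z
  have hclosed : IsClosed (addr (Sigma.fst : Letter S → Fin m) ω) := by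
    have : addr (Sigma.fst : Letter S → Fin m) ω =
        ⋂ l, (fun z : ℕ → Letter S => z l) ⁻¹' {t | t.1 = ω l} := by
      ext z; simp [addr]
    rw [this]
    exact isClosed_iInter fun l => (isClosed_discrete _).preimage (continuous_apply l)
  exact hclosed.isCompact.image
    ((continuous_point h.horiz hβ).prodMk (continuous_point h.vert hβ))

/-- Uniform closeness of the `n`-th approximations to the coded set: each point of one is within
`β ^ n * D` of a point of the other. -/
theorem exists_close (hm : 0 < m) {A : Set (ℝ × ℝ)} (hA : A.Nonempty)
    (hAc : IsCompact A) : ∃ β D : ℝ, 0 < β ∧ β < 1 ∧ 0 ≤ D ∧ ∀ (ω : ℕ → Fin m) (n : ℕ),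
      (∀ p ∈ (List.range n).foldr (fun k B => (S (ω k)).hutch B) A,
        ∃ y ∈ coded S ω, dist p y ≤ β ^ n * D) ∧
      ∀ y ∈ coded S ω, ∃ p ∈ (List.range n).foldr (fun k B => (S (ω k)).hutch B) A,
        dist y p ≤ β ^ n * D := by
  obtain ⟨α, β, h⟩ := exists_isCarpet S hm
  obtain ⟨z₀, -⟩ := addr_nonempty S fun _ => ⟨0, hm⟩
  obtain ⟨q₀, hq₀⟩ := hA
  obtain ⟨D, hD⟩ := hAc.isBounded.exists_norm_le
  have hD0 : 0 ≤ D := (norm_nonneg _).trans (hD q₀ hq₀)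
  have hβ := h.horiz.β_pos z₀
  have hdist : ∀ (z : ℕ → Letter S) (n : ℕ), ∀ q ∈ A,
      dist (corner (la S) (lc S) z n + ratio (la S) z n * q.1,
        corner (lb S) (ld S) z n + ratio (lb S) z n * q.2)
        (planePoint (la S) (lb S) (lc S) (ld S) z) ≤ β ^ n * (D + 1) := by
    intro z n q hq
    have hq1 : |q.1| ≤ D := (norm_fst_le q).trans (hD q hq)
    have hq2 : |q.2| ≤ D := (norm_snd_le q).trans (hD q hq)
    rw [Prod.dist_eq]
    refine max_le ?_ ?_
    · exact (h.horiz.abs_image_sub_point_le z n q.1).trans (by gcongr)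
    · exact (h.vert.abs_image_sub_point_le z n q.2).trans (by gcongr)
  refine ⟨β, D + 1, hβ, h.horiz.lt_one, by linarith, fun ω n => ⟨fun p hp => ?_, ?_⟩⟩
  · obtain ⟨z, hz, q, hq, rfl⟩ := (mem_foldr_iff S ω n A p).1 hp
    exact ⟨_, ⟨z, hz, rfl⟩, hdist z n q hq⟩
  · rintro _ ⟨z, hz, rfl⟩
    refine ⟨_, (mem_foldr_iff S ω n A _).2 ⟨z, hz, q₀, hq₀, rfl⟩, ?_⟩
    rw [dist_comm]
    exact hdist z n q₀ hq₀

theorem isLimitSet_coded (hm : 0 < m) (ω : ℕ → Fin m) : IsLimitSet S ω (coded S ω) := by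
  refine ⟨(addr_nonempty S ω).image _, isCompact_coded S hm ω, fun A hA hAc => ?_⟩
  obtain ⟨β, D, hβ, hβ1, hD, hclose⟩ := exists_close S hm hA hAc
  refine squeeze_zero (fun _ => hausdorffDist_nonneg)
    (fun n => hausdorffDist_le_of_mem_dist (by positivity) (hclose ω n).1 (hclose ω n).2) ?_
  simpa using (tendsto_pow_atTop_nhds_zero_of_lt_one hβ.le hβ1).mul_const D

/-- The limit set is unique: two limit sets are the Hausdorff limit of the same approximations, and
both are compact. -/
theorem isLimitSet_iff (hm : 0 < m) (ω : ℕ → Fin m) (Λ : Set (ℝ × ℝ)) :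
    IsLimitSet S ω Λ ↔ Λ = coded S ω := by
  refine ⟨fun hΛ => ?_, fun h => h ▸ isLimitSet_coded S hm ω⟩
  have hc := isLimitSet_coded S hm ω
  have hlim := (hΛ.2.2 _ hc.1 hc.2.1).add (hc.2.2 _ hc.1 hc.2.1)
  obtain ⟨β, D, hβ, hβ1, hD, hclose⟩ := exists_close S hm hc.1 hc.2.1
  rw [add_zero] at hlim
  have hle : hausdorffDist Λ (coded S ω) ≤ 0 := by
    refine ge_of_tendsto hlim (Eventually.of_forall fun n => ?_)
    rw [hausdorffDist_comm (s := (List.range n).foldr _ _) (t := Λ)]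
    refine hausdorffDist_triangle
      (hausdorffEDist_ne_top_of_nonempty_of_bounded hΛ.1 ?_ hΛ.2.1.isBounded ?_)
    · obtain ⟨y, hy⟩ := hc.1
      obtain ⟨p, hp, -⟩ := (hclose ω n).2 y hy
      exact ⟨p, hp⟩
    · refine (hc.2.1.isBounded.cthickening (δ := β ^ n * D)).subset fun p hp => ?_
      obtain ⟨y, hy, hpy⟩ := (hclose ω n).1 p hp
      exact mem_cthickening_of_dist_le p y _ _ hy hpy
  exact (hΛ.2.1.isClosed.hausdorffDist_zero_iff_eq hc.2.1.isClosed
    (hausdorffEDist_ne_top_of_nonempty_of_bounded hΛ.1 hc.1 hΛ.2.1.isBounded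
      hc.2.1.isBounded)).1 (le_antisymm hle hausdorffDist_nonneg)

end LimitSet

/-! ### Periodic sequences with prescribed rational frequencies -/

section Periodic

variable {m : ℕ}

theorem hasLimitFreq_iff_count {ω : ℕ → Fin m} {k : Fin m} {P : ℝ} : HasLimitFreq ω k P ↔
    Tendsto (fun n : ℕ => (Nat.count (fun l => ω l = k) n : ℝ) / n) atTop (nhds P) := by
  simp only [HasLimitFreq, Nat.count_eq_card_filter_range]

/-- In a sequence of period `N`, the limit frequency of a symbol is its frequency in the first
period. -/
theorem hasLimitFreq_of_periodic {ω : ℕ → Fin m} {N : ℕ} (hN : 0 < N)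
    (hω : ∀ l, ω (l + N) = ω l) (k : Fin m) :
    HasLimitFreq ω k ((Nat.count (fun l => ω l = k) N : ℝ) / N) := by
  rw [hasLimitFreq_iff_count]
  set c : ℕ := Nat.count (fun l => ω l = k) N with hc
  have hN' : (0 : ℝ) < N := by exact_mod_cast hN
  have hadd : ∀ q r, Nat.count (fun l => ω l = k) (N * q + r) =
      c * q + Nat.count (fun l => ω l = k) r := by
    intro q r
    induction q with
    | zero => simp
    | succ q ih =>
      have h1 : N * (q + 1) + r = N + (N * q + r) := by ring
      have h2 : ∀ l, ω (N + l) = ω l := fun l => by rw [add_comm, hω]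
      rw [h1, Nat.count_add]
      simp only [h2]
      rw [ih, ← hc]; ring
  have hbd : ∀ n : ℕ, 0 < n →
      |(Nat.count (fun l => ω l = k) n : ℝ) / n - c / N| ≤ N / n := by
    intro n hn
    have hn' : (0 : ℝ) < n := by exact_mod_cast hn
    have h1 := hadd (n / N) (n % N)
    rw [Nat.div_add_mod] at h1
    set r := Nat.count (fun l => ω l = k) (n % N) with hr
    have hnr : (n : ℝ) = N * (n / N : ℕ) + (n % N : ℕ) := by
      exact_mod_cast (Nat.div_add_mod n N).symm
    have hrN : (r : ℝ) ≤ N := by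
      exact_mod_cast (Nat.count_le _).trans (Nat.mod_lt n hN).le
    have hmN : ((n % N : ℕ) : ℝ) ≤ N := by exact_mod_cast (Nat.mod_lt n hN).le
    have hcN : (c : ℝ) / N ≤ 1 := by
      rw [div_le_one hN']; exact_mod_cast Nat.count_le _
    have hc0 : (0 : ℝ) ≤ c / N := by positivity
    have h2 : (Nat.count (fun l => ω l = k) n : ℝ) / n - c / N =
        (r - c / N * (n % N : ℕ)) / n := by
      have : (c : ℝ) / N * n = c * (n / N : ℕ) + c / N * (n % N : ℕ) := by
        rw [hnr]; field_simp
      rw [h1, div_sub' hn'.ne']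
      push_cast
      rw [mul_comm (n : ℝ), this]; ring
    rw [h2, abs_div, abs_of_pos hn']
    gcongr
    have h3 : (c : ℝ) / N * (n % N : ℕ) ≤ 1 * N := by gcongr
    have h4 : (0 : ℝ) ≤ c / N * (n % N : ℕ) := by positivity
    have h5 : (0 : ℝ) ≤ r := by positivity
    exact abs_le.2 ⟨by linarith, by linarith⟩
  rw [tendsto_iff_dist_tendsto_zero]
  refine squeeze_zero' (Eventually.of_forall fun _ => dist_nonneg) ?_
    (tendsto_const_div_atTop_nhds_zero_nat (N : ℝ))
  filter_upwards [eventually_gt_atTop 0] with n hn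
  exact hbd n hn

/-- A positive tuple of integers `p` is realised as the numbers of appearances of the symbols in
one period of a periodic sequence. -/
theorem exists_periodic (p : Fin m → ℕ) (hp : 0 < ∑ k, p k) :
    ∃ ω : ℕ → Fin m, IsPeriodic ω ∧
      ∀ k, HasLimitFreq ω k ((p k : ℝ) / ((∑ k, p k : ℕ) : ℝ)) := by
  set N := ∑ k, p k with hN
  have e : Fin N ≃ (k : Fin m) × Fin (p k) := Fintype.equivOfCardEq (by simp [hN])
  refine ⟨fun l => (e ⟨l % N, Nat.mod_lt _ hp⟩).1, ⟨N, hp, fun l => by simp⟩, fun k => ?_⟩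
  convert hasLimitFreq_of_periodic hp (ω := fun l => (e ⟨l % N, Nat.mod_lt _ hp⟩).1)
    (fun l => by simp) k
  rw [Nat.count_eq_card_filter_range, card_filter, Finset.sum_range]
  simp only [Nat.mod_eq_of_lt (Fin.is_lt _)]
  rw [e.sum_comp fun s => if s.1 = k then 1 else 0, Fintype.sum_sigma]
  have hk : ∀ x, (∑ y : Fin (p x), if (⟨x, y⟩ : (k : Fin m) × Fin (p k)).1 = k then 1 else 0) =
      if x = k then p x else 0 := fun x => by by_cases h : x = k <;> simp [h]
  exact Eq.symm ((Fintype.sum_congr _ _ hk).trans (by simp))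

/-- Rational probability vectors close to `P`, written with a common denominator. -/
theorem exists_rational_seq {P : Fin m → ℝ} (hP : ∀ k, 0 < P k)
    (hPsum : ∑ k, P k = 1) :
    ∃ p : ℕ → Fin m → ℕ, (∀ n k, 0 < p n k) ∧
      ∀ k, Tendsto (fun n => (p n k : ℝ) / ((∑ k, p n k : ℕ) : ℝ)) atTop (nhds (P k)) := by
  refine ⟨fun n k => ⌈P k * ((n + 1 : ℕ) : ℝ)⌉₊, fun n k => Nat.ceil_pos.2 ?_, fun k => ?_⟩
  · have := hP k
    positivity
  · have h1 : ∀ k, Tendsto (fun n : ℕ => (⌈P k * ((n + 1 : ℕ) : ℝ)⌉₊ : ℝ) / ((n + 1 : ℕ) : ℝ))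
        atTop (nhds (P k)) := fun k =>
      (tendsto_nat_ceil_mul_div_atTop (hP k).le).comp
        (tendsto_natCast_atTop_atTop.comp (tendsto_add_atTop_nat 1))
    have h2 := (h1 k).div (tendsto_finsetSum univ fun k _ => h1 k)
      (by rw [hPsum]; exact one_ne_zero)
    rw [hPsum, div_one] at h2
    refine h2.congr fun n => ?_
    have : ((n + 1 : ℕ) : ℝ) ≠ 0 := by positivity
    push_cast at this ⊢
    rw [Pi.div_apply, ← Finset.sum_div, div_div_div_cancel_right₀ this]

end Periodic

/-! ### The dimension as a function of the frequencies -/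

section Deterministic

theorem le_of_forall_nnreal_mul_le {x y : ENNReal}
    (h : ∀ γ : NNReal, 0 < γ → γ < 1 → (γ : ENNReal) * x ≤ y) : x ≤ y := by
  refine ENNReal.le_of_forall_lt_one_mul_le fun a ha => ?_
  lift a to NNReal using ha.ne_top
  rcases eq_or_ne a 0 with rfl | h0
  · simp
  · exact h a (pos_iff_ne_zero.2 h0) (by exact_mod_cast ha)

variable {m : ℕ} (S : Fin m → LGScheme)

/-- The dimension of a limit set with positive limit frequencies `P` is the value at `P` of any
function that is continuous on the simplex and gives the dimension for periodic sequences. -/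
theorem dimH_coded (hm : 0 < m) {P : Fin m → ℝ} (hP : ∀ k, 0 < P k)
    (hPsum : ∑ k, P k = 1) {𝓛 : (Fin m → ℝ) → ℝ}
    (h𝓛cont : ContinuousOn 𝓛 {x : Fin m → ℝ | (∀ k, 0 < x k) ∧ ∑ k, x k = 1})
    (h𝓛 : ∀ Q : Fin m → ℚ, (∀ k, 0 < Q k) → (∑ k, Q k = 1) →
      ∀ ωQ : ℕ → Fin m, IsPeriodic ωQ → (∀ k, HasLimitFreq ωQ k (Q k : ℝ)) →
        ∀ Λ : Set (ℝ × ℝ), IsLimitSet S ωQ Λ →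
          dimH Λ = ENNReal.ofReal (𝓛 fun k => (Q k : ℝ)))
    {ω : ℕ → Fin m} (hω : ∀ k, HasLimitFreq ω k (P k)) :
    dimH (coded S ω) = ENNReal.ofReal (𝓛 P) := by
  obtain ⟨α, β, h⟩ := exists_isCarpet S hm
  have hκ : 0 < Real.log α / Real.log β := by
    obtain ⟨z, -⟩ := addr_nonempty S ω
    have hβ := Real.log_neg (h.horiz.β_pos z) h.horiz.lt_one
    have hα := Real.log_neg h.horiz.pos
      (((h.horiz.le (z 0)).trans (h.horiz.ge _)).trans_lt h.horiz.lt_one)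
    exact div_pos_of_neg_of_neg hα hβ
  set κ := Real.log α / Real.log β with hκdef
  obtain ⟨p, hp, hlim⟩ := exists_rational_seq hP hPsum
  have hN : ∀ n, 0 < ∑ k, p n k := fun n => sum_pos (fun k _ => hp n k) ⟨⟨0, hm⟩, mem_univ _⟩
  choose ωQ hper hfreq using fun n => exists_periodic (p n) (hN n)
  set Q : ℕ → Fin m → ℝ := fun n k => (p n k : ℝ) / ((∑ k, p n k : ℕ) : ℝ) with hQ
  have hQpos : ∀ n k, 0 < Q n k := fun n k =>
    div_pos (by exact_mod_cast hp n k) (by exact_mod_cast hN n)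
  have hQsum : ∀ n, ∑ k, Q n k = 1 := fun n => by
    rw [hQ, ← Finset.sum_div, ← Nat.cast_sum, div_self]
    exact_mod_cast (hN n).ne'
  have hdim : ∀ n, dimH (coded S (ωQ n)) = ENNReal.ofReal (𝓛 (Q n)) := by
    intro n
    have := h𝓛 (fun k => (p n k : ℚ) / ((∑ k, p n k : ℕ) : ℚ)) (fun k =>
      div_pos (by exact_mod_cast hp n k) (by exact_mod_cast hN n))
      (by
        rw [← Finset.sum_div, ← Nat.cast_sum, div_self]
        exact_mod_cast (hN n).ne') (ωQ n) (hper n) (fun k => by simpa using hfreq n k) _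
      (isLimitSet_coded S hm _)
    rw [this]
    congr 2
    ext k
    simp [hQ]
  have hlim𝓛 : Tendsto (fun n => ENNReal.ofReal (𝓛 (Q n))) atTop
      (nhds (ENNReal.ofReal (𝓛 P))) := by
    refine ENNReal.tendsto_ofReal ((h𝓛cont P ⟨hP, hPsum⟩).tendsto.comp ?_)
    exact tendsto_nhdsWithin_iff.2
      ⟨tendsto_pi_nhds.2 hlim, Eventually.of_forall fun n => ⟨hQpos n, hQsum n⟩⟩
  -- `ε` is chosen so that `γ = 1 - ε * κ`
  have hev : ∀ γ : NNReal, γ < 1 → ∃ ε : ℝ, 0 ≤ ε ∧ (γ : ℝ) = 1 - ε * κ ∧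
      ∀ᶠ n in atTop, (∀ k, Q n k < (1 + ε) * P k) ∧ ∀ k, P k < (1 + ε) * Q n k := by
    intro γ hγ
    have hγ' : (γ : ℝ) < 1 := by exact_mod_cast hγ
    have hε : 0 < (1 - γ) / κ := div_pos (by linarith) hκ
    refine ⟨(1 - γ) / κ, hε.le, by field_simp; ring, ?_⟩
    refine (eventually_all.2 fun k => (hlim k).eventually_lt_const ?_).and
      (eventually_all.2 fun k => ((hlim k).const_mul _).eventually_const_lt ?_) <;>
      nlinarith [hP k]
  apply le_antisymm
  · refine le_of_forall_nnreal_mul_le fun γ hγ0 hγ1 => ge_of_tendsto hlim𝓛 ?_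
    obtain ⟨ε, hε, hγε, hn⟩ := hev γ hγ1
    filter_upwards [hn] with n hn
    rw [← hdim n]
    exact h.mul_dimH_le hε (hQpos n) hP hn.2 (hfreq n) hω hγ0 hγε
  · refine le_of_forall_nnreal_mul_le fun γ hγ0 hγ1 =>
      le_of_tendsto (ENNReal.Tendsto.const_mul hlim𝓛 (Or.inr ENNReal.coe_ne_top)) ?_
    obtain ⟨ε, hε, hγε, hn⟩ := hev γ hγ1
    filter_upwards [hn] with n hn
    rw [← hdim n]
    exact h.mul_dimH_le hε hP (hQpos n) hn.1 hω (hfreq n) hγ0 hγε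

end Deterministic

/-! ### Frequencies of Bernoulli sequences -/

section Bernoulli

open MeasureTheory ProbabilityTheory

/-- The strong law of large numbers for the indicators of `ω l = k`. The formula for the mass of
cylinders gives that the coordinates are pairwise independent and identically distributed. -/
theorem ae_hasLimitFreq {m : ℕ} {P : Fin m → ℝ} (hP : ∀ k, 0 < P k)
    (μ : Measure (ℕ → Fin m)) [IsProbabilityMeasure μ]
    (hμ : ∀ (t : Finset ℕ) (v : ℕ → Fin m),
      μ {ω | ∀ l ∈ t, ω l = v l} = ∏ l ∈ t, ENNReal.ofReal (P (v l))) :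
    ∀ᵐ ω ∂μ, ∀ k, HasLimitFreq ω k (P k) := by
  have hmap : ∀ i, μ.map (fun ω => ω i) = μ.map (fun ω => ω 0) := by
    have h1 : ∀ i k, μ.map (fun ω : ℕ → Fin m => ω i) {k} = ENNReal.ofReal (P k) := fun i k => by
      rw [Measure.map_apply (measurable_pi_apply i) (measurableSet_singleton k)]
      simpa [Set.preimage] using hμ {i} fun _ => k
    exact fun i => Measure.ext_of_singleton fun k => by rw [h1, h1]
  have hindep : ∀ i j, i ≠ j → IndepFun (fun ω : ℕ → Fin m => ω i) (fun ω => ω j) μ := by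
    intro i j hij
    rw [indepFun_iff_map_prod_eq_prod_map_map (measurable_pi_apply i).aemeasurable
      (measurable_pi_apply j).aemeasurable]
    refine Measure.ext_of_singleton fun ⟨k, l⟩ => ?_
    rw [← Set.singleton_prod_singleton, Measure.prod_prod,
      Measure.map_apply ((measurable_pi_apply i).prodMk (measurable_pi_apply j))
        ((measurableSet_singleton k).prod (measurableSet_singleton l)),
      Measure.map_apply (measurable_pi_apply i) (measurableSet_singleton k),
      Measure.map_apply (measurable_pi_apply j) (measurableSet_singleton l)]
    have h1 := hμ {i} fun _ => k
    have h2 := hμ {j} fun _ => l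
    have h3 := hμ {i, j} (Function.update (fun _ => k) j l)
    rw [prod_pair hij] at h3
    simp [Function.update_of_ne hij] at h1 h2 h3
    have h4 : (fun ω : ℕ → Fin m => (ω i, ω j)) ⁻¹' {k} ×ˢ {l} = {ω | ω i = k ∧ ω j = l} := by
      ext; simp
    have h5 : (fun ω : ℕ → Fin m => ω i) ⁻¹' {k} = {ω | ω i = k} := rfl
    have h6 : (fun ω : ℕ → Fin m => ω j) ⁻¹' {l} = {ω | ω j = l} := rfl
    rw [h4, h5, h6, h1, h2, h3]
  rw [ae_all_iff]
  intro k
  set g : Fin m → ℝ := fun t => if t = k then 1 else 0 with hg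
  have hgm : Measurable g := measurable_of_finite _
  have hlaw := strong_law_ae_real (μ := μ) (fun i ω => g (ω i))
    (Integrable.of_bound (C := 1) (hgm.comp (measurable_pi_apply 0)).aestronglyMeasurable
      (Eventually.of_forall fun ω => by
        simp only [hg]; split_ifs <;> simp))
    (fun i j hij => (hindep i j hij).comp hgm hgm)
    (fun i => IdentDistrib.comp ⟨(measurable_pi_apply i).aemeasurable,
      (measurable_pi_apply 0).aemeasurable, hmap i⟩ hgm)
  have hmean : ∫ ω, g (ω 0) ∂μ = P k := by
    have h1 : (fun ω : ℕ → Fin m => g (ω 0)) = Set.indicator {ω | ω 0 = k} 1 := by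
      ext ω; simp [hg, Set.indicator_apply]
    have hmeas : MeasurableSet {ω : ℕ → Fin m | ω 0 = k} :=
      measurableSet_eq_fun (measurable_pi_apply 0) measurable_const
    rw [h1, integral_indicator_one hmeas, measureReal_def]
    have := hμ {0} fun _ => k
    simp only [mem_singleton, forall_eq, prod_singleton] at this
    rw [this, ENNReal.toReal_ofReal (hP k).le]
  filter_upwards [hlaw] with ω hω
  rw [hmean] at hω
  simpa [HasLimitFreq, hg, sum_boole] using hω

end Bernoulli

end Carpet

open MeasureTheory in
/-- Let `S 1, …, S m` be Lalley–Gatzouras schemes and let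
`ω ∈ {1,…,m}^ℕ` be chosen at random with respect to the Bernoulli measure `μ` with
positive weights `(P 1, …, P m)` (the measure giving each cylinder
`{ω : ω l = v l for l ∈ t}` the mass `∏_{l ∈ t} P (v l)`).  Then almost surely each
symbol `k` has limit frequency `P k`, and consequently almost surely
`dim_H Λ_ω = 𝓛(P)`, where `𝓛` is the continuous extension to the open simplex of the
function assigning to each positive rational probability vector `Q` the common value
`dim_H Λ_{ω(Q)}` over periodic sequences `ω(Q)` with frequencies `Q`.  In particular
`dim_H Λ_ω` is almost surely constant. -/
theorem statement19 {m : ℕ} (hm : 0 < m) (S : Fin m → LGScheme)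
    (P : Fin m → ℝ) (hPpos : ∀ k, 0 < P k) (hPsum : ∑ k, P k = 1)
    (μ : Measure (ℕ → Fin m)) [IsProbabilityMeasure μ]
    (hμ : ∀ (t : Finset ℕ) (v : ℕ → Fin m),
      μ {ω | ∀ l ∈ t, ω l = v l} = ∏ l ∈ t, ENNReal.ofReal (P (v l)))
    (𝓛 : (Fin m → ℝ) → ℝ)
    (h𝓛cont : ContinuousOn 𝓛 {x : Fin m → ℝ | (∀ k, 0 < x k) ∧ ∑ k, x k = 1})
    (h𝓛 : ∀ Q : Fin m → ℚ, (∀ k, 0 < Q k) → (∑ k, Q k = 1) →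
      ∀ ωQ : ℕ → Fin m, IsPeriodic ωQ → (∀ k, HasLimitFreq ωQ k (Q k : ℝ)) →
        ∀ Λ : Set (ℝ × ℝ), IsLimitSet S ωQ Λ →
          dimH Λ = ENNReal.ofReal (𝓛 fun k => (Q k : ℝ))) :
    ∀ᵐ ω ∂μ, (∀ k, HasLimitFreq ω k (P k)) ∧
      ∀ Λ : Set (ℝ × ℝ), IsLimitSet S ω Λ → dimH Λ = ENNReal.ofReal (𝓛 P) := by
  filter_upwards [Carpet.ae_hasLimitFreq hPpos μ hμ] with ω hω
  refine ⟨hω, fun Λ hΛ => ?_⟩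
  rw [(Carpet.isLimitSet_iff S hm ω Λ).1 hΛ]
  exact Carpet.dimH_coded S hm hPpos hPsum h𝓛cont h𝓛 hω
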